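/- Let B ≤ GL(n,ℂ) be the subgroup of invertible lower-triangular matrices, and let R be a subset of the space of bilinear maps ℂⁿ × ℂⁿ → ℂⁿ which is closed in the standard topology and stable under the action of B (i.e., b·μ ∈ R for all b ∈ B, μ ∈ R). If μ ∈ R and λ lies in the closure of the orbit O(μ), then there exists g ∈ GL(n,ℂ) such that g·λ ∈ R. -/

import Mathlib

open ContinuousLinearMap

/-- The underlying space `ℂⁿ`. -/
abbrev Vn (n : ℕ) := Fin n → ℂ

/-- The space of bilinear maps `ℂⁿ × ℂⁿ → ℂⁿ` (as continuous linear maps in two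
arguments), carrying its standard topology as a finite-dimensional complex vector space. -/
abbrev Bil (n : ℕ) := Vn n →L[ℂ] Vn n →L[ℂ] Vn n

/-- The action of `GL(n, ℂ)` on bilinear maps: `(g · μ)(x, y) = g (μ (g⁻¹ x) (g⁻¹ y))`. -/
noncomputable def act {n : ℕ} (g : Vn n ≃L[ℂ] Vn n) (μ : Bil n) : Bil n :=
  ((compL ℂ (Vn n) (Vn n) (Vn n)).flip (g.symm : Vn n →L[ℂ] Vn n)).comp
    (((compL ℂ (Vn n) (Vn n) (Vn n)) (g : Vn n →L[ℂ] Vn n)).comp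
      (μ.comp (g.symm : Vn n →L[ℂ] Vn n)))

@[simp] lemma act_apply {n : ℕ} (g : Vn n ≃L[ℂ] Vn n) (μ : Bil n) (x y : Vn n) :
    act g μ x y = g (μ (g.symm x) (g.symm y)) := rfl

/-- The orbit `O(μ)` of a bilinear map under the `GL(n, ℂ)`-action. -/
noncomputable def orbit {n : ℕ} (μ : Bil n) : Set (Bil n) :=
  {ν | ∃ g : Vn n ≃L[ℂ] Vn n, ν = act g μ}

/-- `g` is lower triangular: its matrix in the standard basis of `ℂⁿ` has zero
entries above the diagonal. -/
def IsLowerTriangular {n : ℕ} (g : Vn n ≃L[ℂ] Vn n) : Prop :=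
  ∀ i j : Fin n, i < j →
    LinearMap.toMatrix' ((g : Vn n →L[ℂ] Vn n) : Vn n →ₗ[ℂ] Vn n) i j = 0

open Matrix in
lemma exists_unitary_lower {n : ℕ} (M : Matrix (Fin n) (Fin n) ℂ) :
    ∃ U ∈ Matrix.unitaryGroup (Fin n) ℂ, ∀ i j : Fin n, i < j → (U * M) i j = 0 := by
  let f : Fin n → EuclideanSpace ℂ (Fin n) := fun j => WithLp.toLp 2 (fun i => M i j.rev)
  have hc : Module.finrank ℂ (EuclideanSpace ℂ (Fin n)) = Fintype.card (Fin n) := by simp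
  let b := InnerProductSpace.gramSchmidtOrthonormalBasis hc f
  let b' := b.reindex Fin.revPerm
  have hU := (EuclideanSpace.basisFun (Fin n) ℂ).toMatrix_orthonormalBasis_mem_unitary b'
  refine ⟨star ((EuclideanSpace.basisFun (Fin n) ℂ).toBasis.toMatrix b'), Unitary.star_mem hU, ?_⟩
  intro i j hij
  have h := InnerProductSpace.gramSchmidtOrthonormalBasis_inv_triangular hc f
    (Fin.rev_lt_rev.mpr hij)
  rw [PiLp.inner_apply] at h
  rw [Matrix.mul_apply, ← h]
  refine Finset.sum_congr rfl fun k _ => ?_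
  simp [Matrix.star_apply, Module.Basis.toMatrix_apply, b', b, f, mul_comm]

lemma isCompact_unitaryGroup (n : ℕ) :
    IsCompact (Matrix.unitaryGroup (Fin n) ℂ : Set (Matrix (Fin n) (Fin n) ℂ)) := by
  have h : IsCompact (Set.univ.pi fun _ : Fin n => Set.univ.pi fun _ : Fin n =>
      Metric.closedBall (0 : ℂ) 1) :=
    isCompact_univ_pi fun _ => isCompact_univ_pi fun _ => isCompact_closedBall _ _
  refine IsCompact.of_isClosed_subset (X := Matrix (Fin n) (Fin n) ℂ) h isClosed_unitary ?_
  intro U hU i _ j _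
  simpa using entry_norm_bound_of_unitary hU i j

/-- The continuous linear map of a matrix. -/
noncomputable def matCLM {n : ℕ} (A : Matrix (Fin n) (Fin n) ℂ) : Vn n →L[ℂ] Vn n :=
  LinearMap.toContinuousLinearMap (Matrix.toLin' A)

lemma matCLM_apply {n : ℕ} (A : Matrix (Fin n) (Fin n) ℂ) (x : Vn n) :
    matCLM A x = A.mulVec x := rfl

lemma continuous_matCLM {n : ℕ} : Continuous (matCLM (n := n)) := by
  let L : Matrix (Fin n) (Fin n) ℂ →ₗ[ℂ] (Vn n →L[ℂ] Vn n) :=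
    (LinearMap.toContinuousLinearMap (𝕜 := ℂ) (E := Vn n) (F' := Vn n)).toLinearMap ∘ₗ
      (Matrix.toLin' (R := ℂ) (m := Fin n) (n := Fin n)).toLinearMap
  exact LinearMap.continuous_of_finiteDimensional L

/-- The continuous linear equivalence of a unitary matrix. -/
noncomputable def uniEquiv {n : ℕ} (U : Matrix.unitaryGroup (Fin n) ℂ) : Vn n ≃L[ℂ] Vn n :=
  ContinuousLinearEquiv.equivOfInverse (matCLM U.1) (matCLM (star U.1))
    (fun x => by simp [matCLM_apply, Matrix.mulVec_mulVec])
    (fun x => by simp [matCLM_apply, Matrix.mulVec_mulVec])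

lemma continuous_uni_act (n : ℕ) :
    Continuous fun p : Matrix.unitaryGroup (Fin n) ℂ × Bil n => act (uniEquiv p.1) p.2 := by
  have h1 : Continuous fun p : Matrix.unitaryGroup (Fin n) ℂ × Bil n => matCLM p.1.1 :=
    continuous_matCLM.comp (continuous_subtype_val.comp continuous_fst)
  have h2 : Continuous fun p : Matrix.unitaryGroup (Fin n) ℂ × Bil n => matCLM (star p.1.1) :=
    continuous_matCLM.comp (continuous_star.comp (continuous_subtype_val.comp continuous_fst))
  change Continuous fun p : Matrix.unitaryGroup (Fin n) ℂ × Bil n =>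
    ((compL ℂ (Vn n) (Vn n) (Vn n)).flip (matCLM (star p.1.1))).comp
    (((compL ℂ (Vn n) (Vn n) (Vn n)) (matCLM p.1.1)).comp
      (p.2.comp (matCLM (star p.1.1))))
  exact ((ContinuousLinearMap.continuous _).comp h2).clm_comp
    (((ContinuousLinearMap.continuous _).comp h1).clm_comp (continuous_snd.clm_comp h2))

/-- If `R` is a closed subset of the space of bilinear maps, stable under the Borel
subgroup of lower-triangular invertible matrices, `μ ∈ R` and `λ` lies in the closure
of `O(μ)`, then some `GL(n, ℂ)`-translate of `λ` lies in `R`. -/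
theorem borel_stable_closed_subset (n : ℕ) (R : Set (Bil n)) (hRclosed : IsClosed R)
    (hRstable : ∀ b : Vn n ≃L[ℂ] Vn n, IsLowerTriangular b → ∀ μ ∈ R, act b μ ∈ R)
    (μ : Bil n) (hμ : μ ∈ R) (lam : Bil n) (hlam : lam ∈ closure (orbit μ)) :
    ∃ g : Vn n ≃L[ℂ] Vn n, act g lam ∈ R := by
  have : CompactSpace (Matrix.unitaryGroup (Fin n) ℂ) :=
    isCompact_iff_compactSpace.mp (isCompact_unitaryGroup n)
  have hS := isClosedMap_snd_of_compactSpace _ (hRclosed.preimage (continuous_uni_act n))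
  have hsub : orbit μ ⊆ Prod.snd ''
      ((fun p : Matrix.unitaryGroup (Fin n) ℂ × Bil n => act (uniEquiv p.1) p.2) ⁻¹' R) := by
    rintro _ ⟨g, rfl⟩
    obtain ⟨U, hU, hL⟩ := exists_unitary_lower
      (LinearMap.toMatrix' ((g : Vn n →L[ℂ] Vn n) : Vn n →ₗ[ℂ] Vn n))
    refine ⟨(⟨U, hU⟩, act g μ), ?_, rfl⟩
    refine hRstable (g.trans (uniEquiv ⟨U, hU⟩)) ?_ μ hμ
    intro i j hij
    rw [← hL i j hij]
    have : (((g.trans (uniEquiv ⟨U, hU⟩) : Vn n ≃L[ℂ] Vn n) : Vn n →L[ℂ] Vn n) :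
        Vn n →ₗ[ℂ] Vn n) = Matrix.toLin' U ∘ₗ ((g : Vn n →L[ℂ] Vn n) : Vn n →ₗ[ℂ] Vn n) := rfl
    rw [this, LinearMap.toMatrix'_comp, LinearMap.toMatrix'_toLin']
  obtain ⟨⟨U, ν⟩, h, rfl⟩ := closure_minimal hsub hS hlam
  exact ⟨uniEquiv U, h⟩
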